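/- Consider the five orbits of cycles of the model I dP_3 quiver under its D_6 node symmetry: 𝒪_1 = {H}, 𝒪_2 = {P_0,…,P_5}, 𝒪_3 = {C_0,…,C_5}, 𝒪_4 = {R_0,R_1,R_2}, 𝒪_5 = {T_0,T_1}. A subset 𝒮 ⊆ {𝒪_1, 𝒪_2, 𝒪_3, 𝒪_4, 𝒪_5} has the property that every one of the 12 arrows occurs exactly twice in total among the cycles belonging to the orbits in 𝒮 if and only if 𝒮 = {𝒪_3} or 𝒮 = {𝒪_1, 𝒪_4, 𝒪_5}. -/

import Mathlib

/-- The arrows of the model I dP₃ quiver: vertices are `ℤ/6`, with arrows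
`a i : i → i+1` and `b i : i → i+2` for each `i ∈ ℤ/6`. -/
inductive Arrow : Type
  | a : ZMod 6 → Arrow
  | b : ZMod 6 → Arrow
deriving DecidableEq

/-- The hexagon cycle `H = {a_0, a_1, a_2, a_3, a_4, a_5}`. -/
def cycH : Finset Arrow :=
  {Arrow.a 0, Arrow.a 1, Arrow.a 2, Arrow.a 3, Arrow.a 4, Arrow.a 5}

/-- The pentagon cycles `P_i = {a_i, a_{i+1}, a_{i+2}, a_{i+3}, b_{i+4}}`. -/
def cycP (i : ZMod 6) : Finset Arrow :=
  {Arrow.a i, Arrow.a (i + 1), Arrow.a (i + 2), Arrow.a (i + 3), Arrow.b (i + 4)}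

/-- The quadrilateral cycles `C_i = {a_i, a_{i+1}, b_{i+2}, b_{i+4}}`. -/
def cycC (i : ZMod 6) : Finset Arrow :=
  {Arrow.a i, Arrow.a (i + 1), Arrow.b (i + 2), Arrow.b (i + 4)}

/-- The quadrilateral cycles `R_i = {a_i, b_{i+1}, a_{i+3}, b_{i+4}}`. -/
def cycR (i : ZMod 6) : Finset Arrow :=
  {Arrow.a i, Arrow.b (i + 1), Arrow.a (i + 3), Arrow.b (i + 4)}

/-- The triangle cycle `T_0 = {b_0, b_2, b_4}`. -/
def cycT0 : Finset Arrow := {Arrow.b 0, Arrow.b 2, Arrow.b 4}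

/-- The triangle cycle `T_1 = {b_1, b_3, b_5}`. -/
def cycT1 : Finset Arrow := {Arrow.b 1, Arrow.b 3, Arrow.b 5}

/-- The five orbits of cycles under the `D_6` node symmetry:
`𝒪_1 = {H}`, `𝒪_2 = {P_0,…,P_5}`, `𝒪_3 = {C_0,…,C_5}`, `𝒪_4 = {R_0,R_1,R_2}`,
`𝒪_5 = {T_0,T_1}` (indexed here by `0,…,4`). -/
def orbit : Fin 5 → Finset (Finset Arrow) :=
  ![{cycH},
    {cycP 0, cycP 1, cycP 2, cycP 3, cycP 4, cycP 5},
    {cycC 0, cycC 1, cycC 2, cycC 3, cycC 4, cycC 5},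
    {cycR 0, cycR 1, cycR 2},
    {cycT0, cycT1}]

set_option maxRecDepth 100000 in
set_option maxHeartbeats 4000000 in
theorem orbit_sum_a : ∀ (k : Fin 5) (i : ZMod 6),
    (∑ c ∈ orbit k, (if Arrow.a i ∈ c then 1 else 0)) = (![1, 4, 2, 1, 0] : Fin 5 → ℕ) k := by
  decide +kernel

set_option maxRecDepth 100000 in
set_option maxHeartbeats 4000000 in
theorem orbit_sum_b : ∀ (k : Fin 5) (i : ZMod 6),
    (∑ c ∈ orbit k, (if Arrow.b i ∈ c then 1 else 0)) = (![0, 1, 2, 1, 1] : Fin 5 → ℕ) k := by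
  decide +kernel

theorem weights_iff : ∀ S : Finset (Fin 5),
    ((∑ k ∈ S, (![1, 4, 2, 1, 0] : Fin 5 → ℕ) k) = 2 ∧
      (∑ k ∈ S, (![0, 1, 2, 1, 1] : Fin 5 → ℕ) k) = 2) ↔ S = {2} ∨ S = {0, 3, 4} := by
  decide +kernel

/-- a subset `𝒮` of the five orbits has every one of the 12 arrows
occurring exactly twice in total among the cycles of the orbits in `𝒮` if and only if
`𝒮 = {𝒪_3}` or `𝒮 = {𝒪_1, 𝒪_4, 𝒪_5}`. -/
theorem statement13 (S : Finset (Fin 5)) :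
    (∀ x : Arrow, (∑ k ∈ S, ∑ c ∈ orbit k, (if x ∈ c then 1 else 0)) = 2)
      ↔ S = {2} ∨ S = {0, 3, 4} := by
  rw [← weights_iff S]
  constructor
  · intro h
    have ha := h (Arrow.a 0)
    have hb := h (Arrow.b 0)
    simp only [orbit_sum_a] at ha
    simp only [orbit_sum_b] at hb
    exact ⟨ha, hb⟩
  · rintro ⟨ha, hb⟩ (i | i)
    · simp only [orbit_sum_a]
      exact ha
    · simp only [orbit_sum_b]
      exact hb
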